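/- A unary query over ordered unranked Σ-trees is definable in MSO if and only if it is definable in monadic datalog over the extensional predicates ≺_fc (first child), ≺_ns (next sibling), Leaf, LastChild, Root, and P_a for a ∈ Σ. -/

import Mathlib

/-!
From datalog to MSO: the least fixed point of a monadic program is the intersection of all
families of sets of nodes closed under its rules.  Closure under a rule is expressible in
MSO, because first child, next sibling, leaf, last child and root are definable from the
descendant and sibling orders; so `H(x)` is expressed by universal quantification over one
set variable per intensional predicate (`exists_mso_of_datalog`).

From MSO to datalog: a tree is read as a binary tree by the first-child/next-sibling encoding
(`UTree.enc`), and the variables of a formula become additional marks on its nodes.  By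
induction on the formula, satisfaction is recognized by a finite deterministic bottom-up
algebra (`recognizable_sat`): the atomic formulas have explicit algebras, conjunction is a
product, negation complements the accepting set, and a set quantifier is a subset
construction.  A first-order quantifier is a set quantifier restricted to singletons.

A datalog program then evaluates such an algebra with one marked node (`Alg.IsRule`).
Bottom-up it computes, for every node, the states of the unmarked subtrees of the encoding.
Top-down it computes the context of a node, that is, the set of states which, if reached
there, make the whole tree accepted; it passes from a node to a child of the encoding using the
state of the other subtree.  A node is output if the state obtained by marking it lies in its
context.  Derived facts have this meaning (`Alg.sem_of_derives`) and at every node facts of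
each kind are derived, so the output is the query (`Alg.derives_out_iff`).
-/

namespace UnrankedTrees

/-! ### Unranked trees: tree domains and ordered unranked Σ-trees.
Nodes are finite strings over ℕ; a tree domain is a finite prefix-closed set
of nodes such that `s ++ [i] ∈ D` implies `s ++ [j] ∈ D` for all `j < i`. -/

abbrev Node : Type := List ℕ

/-- An ordered unranked tree over alphabet `A`: a tree domain with a labeling. -/
structure UTree (A : Type) where
  dom : Finset Node
  nil_mem : ([] : Node) ∈ dom
  prefix_closed : ∀ ⦃s t : Node⦄, s ∈ dom → t <+: s → t ∈ dom
  sib_closed : ∀ ⦃s : Node⦄ ⦃i j : ℕ⦄, s ++ [i] ∈ dom → j < i → s ++ [j] ∈ dom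
  label : Node → A

namespace UTree

variable {A : Type}

/-- The child relation `≺_ch`. -/
def childR (T : UTree A) (s t : Node) : Prop :=
  s ∈ T.dom ∧ t ∈ T.dom ∧ ∃ i : ℕ, t = s ++ [i]

/-- The descendant-or-self relation `≺*_ch` (the prefix relation). -/
def descR (T : UTree A) (s t : Node) : Prop :=
  s ∈ T.dom ∧ t ∈ T.dom ∧ s <+: t

/-- The next-sibling relation `≺_ns`. -/
def nsR (T : UTree A) (s t : Node) : Prop :=
  s ∈ T.dom ∧ t ∈ T.dom ∧ ∃ (u : Node) (i : ℕ), s = u ++ [i] ∧ t = u ++ [i + 1]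

/-- The sibling ordering `≺*_ns` (reflexive-transitive closure of next-sibling). -/
def sibR (T : UTree A) (s t : Node) : Prop :=
  s ∈ T.dom ∧ t ∈ T.dom ∧ ∃ (u : Node) (i j : ℕ), s = u ++ [i] ∧ t = u ++ [j] ∧ i ≤ j

/-- The first-child relation `≺_fc`. -/
def firstChildR (T : UTree A) (s t : Node) : Prop :=
  s ∈ T.dom ∧ t ∈ T.dom ∧ t = s ++ [0]

/-- The number of children of a node. -/
noncomputable def childCount (T : UTree A) (s : Node) : ℕ :=
  Set.ncard {i : ℕ | s ++ [i] ∈ T.dom}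

/-- The list of children of a node `s`, in sibling order: `s·0, …, s·(n-1)`. -/
noncomputable def childrenList (T : UTree A) (s : Node) : List Node :=
  (List.range (T.childCount s)).map fun i => s ++ [i]

/-- `s` is a leaf of `T`. -/
def isLeaf (T : UTree A) (s : Node) : Prop :=
  s ∈ T.dom ∧ ∀ i : ℕ, s ++ [i] ∉ T.dom

/-- `s` has no next sibling in `T` (the root also counts as "last"). -/
def isLast (T : UTree A) (s : Node) : Prop :=
  s = [] ∨ ∃ (u : Node) (i : ℕ), s = u ++ [i] ∧ u ++ [i + 1] ∉ T.dom

end UTree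

/-! ### MSO over ordered unranked trees.
First-order variables and monadic second-order variables are indexed by ℕ.
First-order quantifiers range over the nodes of the tree, set quantifiers over
sets of nodes of the tree. -/

inductive MSO (A : Type) : Type where
  | eq : ℕ → ℕ → MSO A
  | desc : ℕ → ℕ → MSO A               -- x ≺*_ch y
  | sib : ℕ → ℕ → MSO A                -- x ≺*_ns y
  | lab : A → ℕ → MSO A                -- P_a(x)
  | mem : ℕ → ℕ → MSO A                -- X(x)
  | not : MSO A → MSO A
  | and : MSO A → MSO A → MSO A
  | exFO : ℕ → MSO A → MSO A
  | exSO : ℕ → MSO A → MSO A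

namespace MSO

variable {A : Type}

def Sat (T : UTree A) (v : ℕ → Node) (V : ℕ → Set Node) : MSO A → Prop
  | .eq x y => v x = v y
  | .desc x y => T.descR (v x) (v y)
  | .sib x y => T.sibR (v x) (v y)
  | .lab a x => v x ∈ T.dom ∧ T.label (v x) = a
  | .mem X x => v x ∈ V X
  | .not φ => ¬ Sat T v V φ
  | .and φ ψ => Sat T v V φ ∧ Sat T v V ψ
  | .exFO n φ => ∃ s ∈ T.dom, Sat T (Function.update v n s) V φ
  | .exSO n φ => ∃ S : Set Node, S ⊆ ↑T.dom ∧ Sat T v (Function.update V n S) φ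

/-- `φ`, as a sentence, defines the set `L` of trees.  (Quantifying over all
valuations forces the truth value to be independent of the valuation, i.e.
`φ` behaves as a sentence.) -/
def DefinesB (φ : MSO A) (L : Set (UTree A)) : Prop :=
  ∀ (T : UTree A) (v : ℕ → Node) (V : ℕ → Set Node), T ∈ L ↔ Sat T v V φ

/-- `φ`, as a formula whose only free variable is the first-order variable `0`,
defines the unary query `Q`. -/
def DefinesU (φ : MSO A) (Q : UTree A → Set Node) : Prop :=
  ∀ (T : UTree A) (v : ℕ → Node) (V : ℕ → Set Node) (s : Node), s ∈ T.dom →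
    (s ∈ Q T ↔ Sat T (Function.update v 0 s) V φ)

end MSO

/-! ### Monadic datalog over unranked trees. -/

/-- Atoms of monadic datalog programs: extensional predicates
`≺_fc`, `≺_ns`, `Leaf`, `LastChild`, `Root`, `P_a`, plus unary intensional
predicates drawn from `I`; variables are indexed by ℕ. -/
inductive DAtom (A I : Type) : Type where
  | fc : ℕ → ℕ → DAtom A I
  | ns : ℕ → ℕ → DAtom A I
  | leaf : ℕ → DAtom A I
  | lastChild : ℕ → DAtom A I
  | root : ℕ → DAtom A I
  | lab : A → ℕ → DAtom A I
  | idb : I → ℕ → DAtom A I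

namespace DAtom

variable {A I : Type}

def vars : DAtom A I → List ℕ
  | .fc x y => [x, y]
  | .ns x y => [x, y]
  | .leaf x => [x]
  | .lastChild x => [x]
  | .root x => [x]
  | .lab _ x => [x]
  | .idb _ x => [x]

/-- `LastChild` holds of `s·i` when `s·(i+1)` is not in the domain. -/
def lastChildP (T : UTree A) (s : Node) : Prop :=
  s ∈ T.dom ∧ ∃ (u : Node) (i : ℕ), s = u ++ [i] ∧ u ++ [i + 1] ∉ T.dom

/-- Satisfaction of the extensional part of an atom (intensional atoms are
handled separately in the fixed-point semantics). -/
def ExtHolds (T : UTree A) (σ : ℕ → Node) : DAtom A I → Prop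
  | .fc x y => T.firstChildR (σ x) (σ y)
  | .ns x y => T.nsR (σ x) (σ y)
  | .leaf x => T.isLeaf (σ x)
  | .lastChild x => lastChildP T (σ x)
  | .root x => σ x = []
  | .lab a x => σ x ∈ T.dom ∧ T.label (σ x) = a
  | .idb _ _ => True

end DAtom

/-- A monadic datalog rule `H(x) :− P₁, …, P_k`: all intensional predicates
are unary; the head variable must occur in the body. -/
structure DRule (A I : Type) where
  headPred : I
  headVar : ℕ
  body : List (DAtom A I)
  headVar_mem : ∃ a ∈ body, headVar ∈ a.vars

/-- Least-fixed-point semantics of a monadic datalog program, as inductive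
derivability of intensional facts. -/
inductive Derives {A I : Type} (T : UTree A) (P : List (DRule A I)) : I → Node → Prop where
  | step (r : DRule A I) (hr : r ∈ P) (σ : ℕ → Node) (hσ : ∀ n, σ n ∈ T.dom)
      (hext : ∀ a ∈ r.body, DAtom.ExtHolds T σ a)
      (hidb : ∀ (i : I) (y : ℕ), DAtom.idb i y ∈ r.body → Derives T P i (σ y)) :
      Derives T P r.headPred (σ r.headVar)

/-! ### From monadic datalog to MSO -/

namespace MSO

variable {A : Type}

/-- Implication, as an abbreviation in MSO. -/
def imp (φ ψ : MSO A) : MSO A := .not (.and φ (.not ψ))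

/-- First-order universal quantification over the nodes of the tree. -/
def allFO (n : ℕ) (φ : MSO A) : MSO A := .not (.exFO n (.not φ))

/-- Universal quantification over the sets of nodes of the tree. -/
def allSO (n : ℕ) (φ : MSO A) : MSO A := .not (.exSO n (.not φ))

/-- A valid formula. -/
def tru : MSO A := allFO 0 (.eq 0 0)

variable {T : UTree A} {v : ℕ → Node} {V : ℕ → Set Node}

@[simp] lemma sat_imp {φ ψ : MSO A} :
    Sat T v V (imp φ ψ) ↔ (Sat T v V φ → Sat T v V ψ) := by
  simp [imp, Sat]

@[simp] lemma sat_allFO {n : ℕ} {φ : MSO A} :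
    Sat T v V (allFO n φ) ↔ ∀ s ∈ T.dom, Sat T (Function.update v n s) V φ := by
  simp [allFO, Sat]

@[simp] lemma sat_allSO {n : ℕ} {φ : MSO A} :
    Sat T v V (allSO n φ) ↔
      ∀ S : Set Node, S ⊆ ↑T.dom → Sat T v (Function.update V n S) φ := by
  simp [allSO, Sat]

@[simp] lemma sat_tru : Sat T v V (tru : MSO A) := by
  simp [tru, Sat]

/-- Conjunction of a list of formulas. -/
def conj : List (MSO A) → MSO A
  | [] => tru
  | φ :: l => .and φ (conj l)

@[simp] lemma sat_conj {l : List (MSO A)} :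
    Sat T v V (conj l) ↔ ∀ φ ∈ l, Sat T v V φ := by
  induction l with
  | nil => simp [conj]
  | cons φ l ih => simp [conj, Sat, ih]

/-- Universal quantification over the first-order variables `0, …, N - 1`. -/
def allFOs : ℕ → MSO A → MSO A
  | 0, φ => φ
  | N + 1, φ => allFOs N (allFO N φ)

lemma sat_allFOs {N : ℕ} {φ : MSO A} :
    Sat T v V (allFOs N φ) ↔
      ∀ σ : ℕ → Node, (∀ n < N, σ n ∈ T.dom) → (∀ n, N ≤ n → σ n = v n) → Sat T σ V φ := by
  induction N generalizing φ with
  | zero =>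
    refine ⟨fun h σ _ h2 => ?_, fun h => h v (by simp) (by simp)⟩
    have : σ = v := funext fun n => h2 n (Nat.zero_le n)
    rw [this]; exact h
  | succ N ih =>
    simp only [allFOs, ih, sat_allFO]
    constructor
    · intro h σ h1 h2
      have := h (Function.update σ N (v N))
        (fun n hn => by rw [Function.update_of_ne (by omega)]; exact h1 n (by omega))
        (fun n hn => by
          rcases eq_or_ne n N with rfl | hne
          · simp
          · rw [Function.update_of_ne hne]; exact h2 n (by omega))
        (σ N) (h1 N (by omega))
      simpa using this
    · intro h σ h1 h2 s hs
      refine h _ (fun n hn => ?_) (fun n hn => ?_)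
      · rcases eq_or_ne n N with rfl | hne
        · simpa using hs
        · rw [Function.update_of_ne hne]; exact h1 n (by omega)
      · rw [Function.update_of_ne (by omega)]; exact h2 n (by omega)

/-- Universal quantification over the set variables `0, …, N - 1`. -/
def allSOs : ℕ → MSO A → MSO A
  | 0, φ => φ
  | N + 1, φ => allSOs N (allSO N φ)

lemma sat_allSOs {N : ℕ} {φ : MSO A} :
    Sat T v V (allSOs N φ) ↔
      ∀ X : ℕ → Set Node, (∀ n < N, X n ⊆ ↑T.dom) → (∀ n, N ≤ n → X n = V n) →
        Sat T v X φ := by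
  induction N generalizing φ with
  | zero =>
    refine ⟨fun h σ _ h2 => ?_, fun h => h V (by simp) (by simp)⟩
    have : σ = V := funext fun n => h2 n (Nat.zero_le n)
    rw [this]; exact h
  | succ N ih =>
    simp only [allSOs, ih, sat_allSO]
    constructor
    · intro h σ h1 h2
      have := h (Function.update σ N (V N))
        (fun n hn => by rw [Function.update_of_ne (by omega)]; exact h1 n (by omega))
        (fun n hn => by
          rcases eq_or_ne n N with rfl | hne
          · simp
          · rw [Function.update_of_ne hne]; exact h2 n (by omega))
        (σ N) (h1 N (by omega))
      simpa using this
    · intro h σ h1 h2 s hs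
      refine h _ (fun n hn => ?_) (fun n hn => ?_)
      · rcases eq_or_ne n N with rfl | hne
        · simpa using hs
        · rw [Function.update_of_ne hne]; exact h1 n (by omega)
      · rw [Function.update_of_ne (by omega)]; exact h2 n (by omega)

/-- `z = x` or `z = y`, used in the definitions of the covering relations. -/
def eqOr (z x y : ℕ) : MSO A := imp (.not (.eq z x)) (.eq z y)

/-- `y` is the first child of `x`: a minimal proper descendant without a
smaller sibling. -/
def fcF (x y : ℕ) : MSO A :=
  .and (.and (.desc x y) (.not (.eq x y)))
    (.and
      (allFO (x + y + 1)
        (imp (.desc x (x + y + 1)) (imp (.desc (x + y + 1) y) (eqOr (x + y + 1) x y))))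
      (allFO (x + y + 1) (imp (.sib (x + y + 1) y) (.eq (x + y + 1) y))))

/-- `y` is the next sibling of `x`. -/
def nsF (x y : ℕ) : MSO A :=
  .and (.and (.sib x y) (.not (.eq x y)))
    (allFO (x + y + 1)
      (imp (.sib x (x + y + 1)) (imp (.sib (x + y + 1) y) (eqOr (x + y + 1) x y))))

/-- `x` has no proper descendant. -/
def leafF (x : ℕ) : MSO A :=
  .and (.desc x x) (allFO (x + 1) (imp (.desc x (x + 1)) (.eq (x + 1) x)))

/-- `x` is the greatest of its siblings; `x ≺*_ns x` excludes the root. -/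
def lastF (x : ℕ) : MSO A :=
  .and (.sib x x) (allFO (x + 1) (imp (.sib x (x + 1)) (.eq (x + 1) x)))

/-- `x` is only a descendant of itself. -/
def rootF (x : ℕ) : MSO A :=
  .and (.desc x x) (allFO (x + 1) (imp (.desc (x + 1) x) (.eq (x + 1) x)))

lemma sat_fcF {x y : ℕ} : Sat T v V (fcF x y) ↔ T.firstChildR (v x) (v y) := by
  have hx : x ≠ x + y + 1 := by omega
  have hy : y ≠ x + y + 1 := by omega
  simp only [fcF, eqOr, Sat, sat_imp, sat_allFO, Function.update_self,
    Function.update_of_ne hx, Function.update_of_ne hy, UTree.firstChildR, UTree.descR,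
    UTree.sibR]
  constructor
  · rintro ⟨⟨⟨h1, h2, w, hw⟩, hne⟩, h3, h4⟩
    refine ⟨h1, h2, ?_⟩
    cases w with
    | nil => simp at hw; exact absurd hw hne
    | cons i w =>
      have hm : v x ++ [i] ∈ T.dom := T.prefix_closed h2 ⟨w, by simp [← hw]⟩
      have hc : v y = v x ++ [i] := by
        by_contra hcon
        have := h3 _ hm ⟨h1, hm, by simp⟩ ⟨hm, h2, w, by simp [← hw]⟩ (by simp)
        exact hcon this.symm
      cases i with
      | zero => exact hc
      | succ i =>
        have hm0 : v x ++ [0] ∈ T.dom := T.sib_closed hm (Nat.succ_pos i)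
        rw [← h4 _ hm0 ⟨hm0, h2, v x, 0, i + 1, rfl, hc, by omega⟩]
  · rintro ⟨h1, h2, h3⟩
    refine ⟨⟨⟨h1, h2, by simp [h3]⟩, by simp [h3]⟩, ?_, ?_⟩
    · rintro z hz ⟨-, -, h5⟩ ⟨-, -, h6⟩ h7
      rw [h3, List.prefix_concat_iff] at h6
      rcases h6 with h6 | h6
      · rw [h6, h3]
      · exact absurd (h6.eq_of_length_le h5.length_le) h7
    · rintro z hz ⟨-, -, u, i, j, rfl, h5, h6⟩
      rw [h3] at h5 ⊢
      obtain ⟨rfl, h7⟩ := List.append_inj' h5 rfl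
      simp at h7
      simp; omega

lemma sat_nsF {x y : ℕ} : Sat T v V (nsF x y) ↔ T.nsR (v x) (v y) := by
  have hx : x ≠ x + y + 1 := by omega
  have hy : y ≠ x + y + 1 := by omega
  simp only [nsF, eqOr, Sat, sat_imp, sat_allFO, Function.update_self,
    Function.update_of_ne hx, Function.update_of_ne hy, UTree.nsR, UTree.sibR]
  constructor
  · rintro ⟨⟨⟨h1, h2, u, i, j, hi, hj, hij⟩, hne⟩, h3⟩
    refine ⟨h1, h2, u, i, hi, ?_⟩
    have hlt : i < j := lt_of_le_of_ne hij (by rintro rfl; exact hne (hi.trans hj.symm))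
    have hm : u ++ [i + 1] ∈ T.dom := by
      rcases eq_or_ne (i + 1) j with h | h
      · rw [h, ← hj]; exact h2
      · exact T.sib_closed (hj ▸ h2) (by omega)
    exact (h3 _ hm ⟨h1, hm, u, i, i + 1, hi, rfl, by omega⟩
      ⟨hm, h2, u, i + 1, j, rfl, hj, by omega⟩ (by rw [hi]; simp)).symm
  · rintro ⟨h1, h2, u, i, hi, hj⟩
    refine ⟨⟨⟨h1, h2, u, i, i + 1, hi, hj, by omega⟩, by rw [hi, hj]; simp⟩, ?_⟩
    rintro z hz ⟨-, -, u1, i1, j1, h4, rfl, h5⟩ ⟨-, -, u2, i2, j2, h6, h7, h8⟩ h9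
    rw [hi] at h4 h9
    rw [hj] at h7 ⊢
    obtain ⟨rfl, h10⟩ := List.append_inj' h4 rfl
    obtain ⟨rfl, h11⟩ := List.append_inj' h6 rfl
    obtain ⟨-, h12⟩ := List.append_inj' h7 rfl
    simp at *
    omega

lemma sat_leafF {x : ℕ} : Sat T v V (leafF x) ↔ T.isLeaf (v x) := by
  have hx : x ≠ x + 1 := by omega
  simp only [leafF, Sat, sat_imp, sat_allFO, Function.update_self,
    Function.update_of_ne hx, UTree.isLeaf, UTree.descR]
  constructor
  · rintro ⟨⟨h1, -⟩, h2⟩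
    exact ⟨h1, fun i hi => by simpa using h2 _ hi ⟨h1, hi, by simp⟩⟩
  · rintro ⟨h1, h2⟩
    refine ⟨⟨h1, h1, List.prefix_rfl⟩, ?_⟩
    rintro z hz ⟨-, -, w, rfl⟩
    cases w with
    | nil => simp
    | cons i w => exact absurd (T.prefix_closed hz ⟨w, by simp⟩) (h2 i)

lemma sat_lastF {x : ℕ} : Sat T v V (lastF x) ↔ DAtom.lastChildP T (v x) := by
  have hx : x ≠ x + 1 := by omega
  simp only [lastF, Sat, sat_imp, sat_allFO, Function.update_self,
    Function.update_of_ne hx, DAtom.lastChildP, UTree.sibR]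
  constructor
  · rintro ⟨⟨h1, -, u, i, j, hi, -⟩, h2⟩
    refine ⟨h1, u, i, hi, fun hm => ?_⟩
    have := h2 _ hm ⟨h1, hm, u, i, i + 1, hi, rfl, by omega⟩
    rw [hi] at this
    simp at this
  · rintro ⟨h1, u, i, hi, h2⟩
    refine ⟨⟨h1, h1, u, i, i, hi, hi, le_rfl⟩, ?_⟩
    rintro z hz ⟨-, -, u1, i1, j1, h4, rfl, h5⟩
    rw [hi] at h4 ⊢
    obtain ⟨rfl, h10⟩ := List.append_inj' h4 rfl
    simp at h10
    subst h10
    rcases eq_or_lt_of_le h5 with h | h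
    · rw [h]
    · exfalso
      apply h2
      rcases eq_or_ne (i + 1) j1 with h' | h'
      · rw [h']; exact hz
      · exact T.sib_closed hz (by omega)

lemma sat_rootF {x : ℕ} : Sat T v V (rootF x) ↔ v x = [] := by
  have hx : x ≠ x + 1 := by omega
  simp only [rootF, Sat, sat_imp, sat_allFO, Function.update_self,
    Function.update_of_ne hx, UTree.descR]
  constructor
  · rintro ⟨⟨h1, -⟩, h2⟩
    exact (h2 _ T.nil_mem ⟨T.nil_mem, h1, by simp⟩).symm
  · intro h
    rw [h]
    refine ⟨⟨T.nil_mem, T.nil_mem, by simp⟩, ?_⟩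
    rintro z hz ⟨-, -, h3⟩
    simpa using h3

end MSO

section DatalogToMSO

variable {A I : Type}

/-- The MSO translation of an atom, where the intensional predicate `i` becomes
the set variable `e i`. -/
def DAtom.toMSO (e : I → ℕ) : DAtom A I → MSO A
  | .fc x y => .fcF x y
  | .ns x y => .nsF x y
  | .leaf x => .leafF x
  | .lastChild x => .lastF x
  | .root x => .rootF x
  | .lab a x => .lab a x
  | .idb i x => .mem (e i) x

lemma DAtom.sat_toMSO {e : I → ℕ} {T : UTree A} {v : ℕ → Node} {V : ℕ → Set Node}
    (a : DAtom A I) :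
    MSO.Sat T v V (a.toMSO e) ↔
      DAtom.ExtHolds T v a ∧ ∀ i y, a = .idb i y → v y ∈ V (e i) := by
  cases a <;>
    simp [DAtom.toMSO, DAtom.ExtHolds, MSO.sat_fcF, MSO.sat_nsF, MSO.sat_leafF,
      MSO.sat_lastF, MSO.sat_rootF, MSO.Sat]

lemma DAtom.extHolds_congr {T : UTree A} {σ τ : ℕ → Node} {a : DAtom A I}
    (h : ∀ x ∈ a.vars, σ x = τ x) : DAtom.ExtHolds T σ a ↔ DAtom.ExtHolds T τ a := by
  cases a <;> simp_all [DAtom.vars, DAtom.ExtHolds]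

/-- A strict upper bound for the variables in the body of a rule. -/
def DRule.bound (r : DRule A I) : ℕ := (r.body.flatMap DAtom.vars).sum + 1

lemma DRule.lt_bound (r : DRule A I) {a : DAtom A I} (ha : a ∈ r.body) {x : ℕ}
    (hx : x ∈ a.vars) : x < r.bound := by
  have : x ∈ r.body.flatMap DAtom.vars := List.mem_flatMap.2 ⟨a, ha, hx⟩
  exact Nat.lt_succ_of_le (List.le_sum_of_mem this)

/-- The formula saying that the set variables are closed under a rule. -/
def DRule.toMSO (e : I → ℕ) (r : DRule A I) : MSO A :=
  .allFOs r.bound (.imp (.conj (r.body.map (DAtom.toMSO e))) (.mem (e r.headPred) r.headVar))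

lemma DRule.sat_toMSO {e : I → ℕ} {T : UTree A} {v : ℕ → Node} {V : ℕ → Set Node}
    (r : DRule A I) :
    MSO.Sat T v V (r.toMSO e) ↔
      ∀ σ : ℕ → Node, (∀ n, σ n ∈ T.dom) → (∀ a ∈ r.body, DAtom.ExtHolds T σ a) →
        (∀ i y, DAtom.idb i y ∈ r.body → σ y ∈ V (e i)) → σ r.headVar ∈ V (e r.headPred) := by
  have hhead : r.headVar < r.bound := by
    obtain ⟨a, ha, hx⟩ := r.headVar_mem
    exact r.lt_bound ha hx
  simp only [DRule.toMSO, MSO.sat_allFOs, MSO.sat_imp, MSO.sat_conj, List.forall_mem_map,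
    DAtom.sat_toMSO, MSO.Sat]
  constructor
  · intro h σ h1 h2 h3
    -- only the variables below `r.bound` matter, the others keep their value under `v`
    have key : ∀ n < r.bound, (if n < r.bound then σ n else v n) = σ n :=
      fun n hn => if_pos hn
    have := h (fun n => if n < r.bound then σ n else v n)
      (fun n hn => by rw [key n hn]; exact h1 n)
      (fun n hn => if_neg (by omega))
      (fun a ha => ⟨(DAtom.extHolds_congr fun x hx => key x (r.lt_bound ha hx)).2 (h2 a ha), by
        rintro i y rfl
        rw [key y (r.lt_bound ha (by simp [DAtom.vars]))]
        exact h3 i y ha⟩)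
    rwa [key _ hhead] at this
  · intro h σ h1 _ h3
    have key : ∀ n < r.bound, (if n < r.bound then σ n else []) = σ n :=
      fun n hn => if_pos hn
    have := h (fun n => if n < r.bound then σ n else [])
      (fun n => by
        by_cases hn : n < r.bound
        · simpa [hn] using h1 n hn
        · simpa [hn] using T.nil_mem)
      (fun a ha => (DAtom.extHolds_congr fun x hx => key x (r.lt_bound ha hx)).2 (h3 a ha).1)
      (fun i y ha => by
        rw [key y (r.lt_bound ha (by simp [DAtom.vars]))]
        exact (h3 _ ha).2 i y rfl)
    rwa [key _ hhead] at this

lemma Derives.mem_dom {T : UTree A} {P : List (DRule A I)} {i : I} {s : Node}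
    (h : Derives T P i s) : s ∈ T.dom := by
  cases h with
  | step r hr σ hσ _ _ => exact hσ _

/-- A datalog query is MSO-definable: a fact `H(x)` is derivable iff `x` belongs
to the `H`-component of every family of sets closed under the rules. -/
theorem exists_mso_of_datalog [Fintype I] (P : List (DRule A I)) (H : I) :
    ∃ φ : MSO A, φ.DefinesU fun T => {s | Derives T P H s} := by
  classical
  let e : I → ℕ := fun i => (Fintype.equivFin I i : ℕ)
  have he : Function.Injective e := fun i j h =>
    (Fintype.equivFin I).injective (Fin.ext h)
  refine ⟨.allSOs (Fintype.card I)
    (.imp (.conj (P.map (DRule.toMSO e))) (.mem (e H) 0)), fun T v V s hs => ?_⟩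
  simp only [MSO.sat_allSOs, MSO.sat_imp, MSO.sat_conj, List.forall_mem_map,
    DRule.sat_toMSO, MSO.Sat, Function.update_self, Set.mem_ofPred_eq]
  constructor
  · intro h X _ _ hX
    clear hs
    induction h with
    | step r hr σ hσ hext _ ih => exact hX r hr σ hσ hext ih
  · intro h
    have := h (fun n => if n < Fintype.card I then {t | ∃ i, e i = n ∧ Derives T P i t} else V n)
      (fun n hn => by
        rw [if_pos hn]
        rintro t ⟨i, -, ht⟩
        exact ht.mem_dom)
      (fun n hn => if_neg (by omega))
    have hlt : ∀ i, e i < Fintype.card I := fun i => (Fintype.equivFin I i).2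
    simp only [hlt, if_true, he.eq_iff, exists_eq_left, Set.mem_ofPred_eq] at this
    exact this fun r hr σ hσ h1 h2 => Derives.step r hr σ hσ h1 h2

end DatalogToMSO

/-! ### Binary encoding of unranked trees -/

/-- Binary trees whose inner vertices are named by nodes of an unranked tree. -/
inductive BT : Type where
  | nil : BT
  | node : Node → BT → BT → BT

namespace BT

/-- The set of nodes occurring in a binary tree. -/
def labels : BT → Set Node
  | nil => ∅
  | node s l r => {s} ∪ (l.labels ∪ r.labels)

/-- No node occurs twice in the binary tree. -/
def Distinct : BT → Prop
  | nil => True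
  | node s l r => s ∉ l.labels ∧ s ∉ r.labels ∧ Disjoint l.labels r.labels ∧
      l.Distinct ∧ r.Distinct

@[simp] lemma mem_labels_nil {t : Node} : t ∈ labels nil ↔ False := Iff.rfl

@[simp] lemma mem_labels_node {s t : Node} {l r : BT} :
    t ∈ labels (node s l r) ↔ t = s ∨ t ∈ l.labels ∨ t ∈ r.labels := Iff.rfl

end BT

/-- The candidate next sibling `u·(i+1)` of a node `u·i`; the value at the root is
irrelevant. -/
def nxt (s : Node) : Node := s.dropLast ++ [s.getLastD 0 + 1]

@[simp] lemma nxt_concat (u : Node) (i : ℕ) : nxt (u ++ [i]) = u ++ [i + 1] := by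
  simp [nxt]

lemma node_cases (s : Node) : s = [] ∨ ∃ u i, s = u ++ [i] := by
  simpa using List.eq_nil_or_concat s

lemma lt_append_zero (s : Node) : s < s ++ [0] := by
  induction s with
  | nil => exact List.Lex.nil
  | cons a s ih => exact List.Lex.cons ih

lemma append_lt_succ (u : Node) (i : ℕ) : u ++ [i] < u ++ [i + 1] := by
  induction u with
  | nil => exact List.Lex.rel (Nat.lt_succ_self i)
  | cons a s ih => exact List.Lex.cons ih

lemma lt_nxt {s : Node} (h : s ≠ []) : s < nxt s := by
  obtain ⟨u, i, rfl⟩ := (node_cases s).resolve_left h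
  simpa using append_lt_succ u i

namespace UTree

variable {A : Type} (T : UTree A)

lemma card_filter_lt {s t : Node} (hs : s ∈ T.dom) (hst : s < t) :
    (T.dom.filter (t ≤ ·)).card < (T.dom.filter (s ≤ ·)).card := by
  refine Finset.card_lt_card (Finset.ssubset_iff_subset_ne.2 ⟨fun x hx => ?_, fun h => ?_⟩)
  · rw [Finset.mem_filter] at hx ⊢
    exact ⟨hx.1, hst.le.trans hx.2⟩
  · have : s ∈ T.dom.filter (s ≤ ·) := Finset.mem_filter.2 ⟨hs, le_rfl⟩
    rw [← h, Finset.mem_filter] at this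
    exact absurd this.2 (not_le.2 hst)

open Classical in
/-- The first-child/next-sibling encoding of the part of the tree reachable from `s`
(the descendants of `s` and of its later siblings): the left subtree encodes
the first child and the right subtree the next sibling.  Both go up in the
lexicographic order of the finite tree domain, which gives termination. -/
noncomputable def enc (s : Node) : BT :=
  if h : s ∈ T.dom then
    .node s (enc (s ++ [0])) (if _h' : s = [] then .nil else enc (nxt s))
  else .nil
termination_by (T.dom.filter (s ≤ ·)).card
decreasing_by
  · exact T.card_filter_lt h (lt_append_zero s)
  · exact T.card_filter_lt h (lt_nxt _h')

open Classical in
/-- The right subtree of `T.enc s`. -/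
noncomputable def encR (s : Node) : BT := if s = [] then .nil else T.enc (nxt s)

variable {T}

lemma enc_of_mem {s : Node} (h : s ∈ T.dom) :
    T.enc s = .node s (T.enc (s ++ [0])) (T.encR s) := by
  rw [enc, dif_pos h]
  simp [encR]

lemma enc_of_not_mem {s : Node} (h : s ∉ T.dom) : T.enc s = .nil := by
  rw [enc, dif_neg h]

lemma encR_nil : T.encR [] = .nil := by simp [encR]

lemma encR_concat (u : Node) (i : ℕ) : T.encR (u ++ [i]) = T.enc (u ++ [i + 1]) := by
  simp [encR]

/-- Induction along the binary encoding, from the bottom to the top. -/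
lemma enc_induction {motive : BT → Prop} (nil : motive .nil)
    (node : ∀ s ∈ T.dom, motive (T.enc (s ++ [0])) → motive (T.encR s) →
      motive (.node s (T.enc (s ++ [0])) (T.encR s))) (s : Node) : motive (T.enc s) := by
  induction hn : (T.dom.filter (s ≤ ·)).card using Nat.strong_induction_on generalizing s with
  | _ n ih =>
    by_cases h : s ∈ T.dom
    · rw [enc_of_mem h]
      refine node s h (ih _ (hn ▸ T.card_filter_lt h (lt_append_zero s)) _ rfl) ?_
      by_cases h' : s = []
      · subst h'; rw [encR_nil]; exact nil
      · rw [encR, if_neg h']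
        exact ih _ (hn ▸ T.card_filter_lt h (lt_nxt h')) _ rfl
    · rw [enc_of_not_mem h]; exact nil

lemma sib_mem {u : Node} {i j : ℕ} (h : u ++ [j] ∈ T.dom) (hij : i ≤ j) : u ++ [i] ∈ T.dom := by
  rcases eq_or_lt_of_le hij with rfl | hlt
  · exact h
  · exact T.sib_closed h hlt

variable (T) in
/-- `t` is a descendant of `s` or of a later sibling of `s`. -/
def Below (s t : Node) : Prop :=
  t ∈ T.dom ∧ (s <+: t ∨ ∃ u i j, s = u ++ [i] ∧ i < j ∧ u ++ [j] <+: t)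

lemma Below.mem_left {s t : Node} (h : T.Below s t) : s ∈ T.dom := by
  obtain ⟨ht, h | ⟨u, i, j, rfl, hij, h⟩⟩ := h
  · exact T.prefix_closed ht h
  · exact sib_mem (T.prefix_closed ht h) hij.le

lemma prefix_iff_eq_or {s t : Node} : s <+: t ↔ t = s ∨ ∃ j, s ++ [j] <+: t := by
  constructor
  · rintro ⟨w, rfl⟩
    cases w with
    | nil => simp
    | cons i w => exact Or.inr ⟨i, w, by simp⟩
  · rintro (rfl | ⟨j, h⟩)
    · exact List.prefix_rfl
    · exact (List.prefix_append _ _).trans h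

lemma below_child {s t : Node} : T.Below (s ++ [0]) t ↔ t ∈ T.dom ∧ ∃ j, s ++ [j] <+: t := by
  refine and_congr_right fun _ => ⟨?_, ?_⟩
  · rintro (h | ⟨u, i, j, h1, -, h2⟩)
    · exact ⟨0, h⟩
    · obtain ⟨rfl, -⟩ := List.append_inj' h1 rfl
      exact ⟨j, h2⟩
  · rintro ⟨j, h⟩
    rcases Nat.eq_zero_or_pos j with rfl | hj
    · exact Or.inl h
    · exact Or.inr ⟨s, 0, j, rfl, hj, h⟩

lemma below_succ {u t : Node} {i : ℕ} :
    T.Below (u ++ [i + 1]) t ↔ t ∈ T.dom ∧ ∃ j, i < j ∧ u ++ [j] <+: t := by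
  refine and_congr_right fun _ => ⟨?_, ?_⟩
  · rintro (h | ⟨u, i, j, h1, h3, h2⟩)
    · exact ⟨_, Nat.lt_succ_self i, h⟩
    · obtain ⟨rfl, h4⟩ := List.append_inj' h1 rfl
      simp at h4
      exact ⟨j, by omega, h2⟩
  · rintro ⟨j, hj, h⟩
    rcases eq_or_ne j (i + 1) with rfl | hne
    · exact Or.inl h
    · exact Or.inr ⟨u, i + 1, j, rfl, by omega, h⟩

lemma mem_labels_enc {s t : Node} : t ∈ (T.enc s).labels ↔ T.Below s t := by
  induction hn : (T.dom.filter (s ≤ ·)).card using Nat.strong_induction_on generalizing s with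
  | _ n ih =>
    by_cases h : s ∈ T.dom
    · have h1 := ih _ (hn ▸ T.card_filter_lt h (lt_append_zero s)) (s := s ++ [0]) rfl
      rw [enc_of_mem h, BT.mem_labels_node, h1, below_child]
      rcases node_cases s with rfl | ⟨u, i, rfl⟩
      · have := T.nil_mem
        simp only [encR_nil, BT.mem_labels_nil, or_false, Below, prefix_iff_eq_or (s := [])]
        have : ¬ ∃ u i j, ([] : Node) = u ++ [i] ∧ i < j ∧ u ++ [j] <+: t := by simp
        grind
      · have h2 := ih _ (hn ▸ T.card_filter_lt h (append_lt_succ u i)) (s := u ++ [i + 1]) rfl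
        rw [encR_concat, h2, below_succ, Below, prefix_iff_eq_or]
        have : (∃ u' i' j, u ++ [i] = u' ++ [i'] ∧ i' < j ∧ u' ++ [j] <+: t) ↔
            ∃ j, i < j ∧ u ++ [j] <+: t := by
          constructor
          · rintro ⟨u', i', j, h1, h2, h3⟩
            obtain ⟨rfl, h4⟩ := List.append_inj' h1 rfl
            simp at h4
            exact ⟨j, h4 ▸ h2, h3⟩
          · rintro ⟨j, h2, h3⟩
            exact ⟨u, i, j, rfl, h2, h3⟩
        rw [this]
        grind
    · rw [enc_of_not_mem h]
      exact ⟨fun h => h.elim, fun h' => h h'.mem_left⟩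

lemma mem_labels_root {t : Node} : t ∈ (T.enc []).labels ↔ t ∈ T.dom := by
  rw [mem_labels_enc]
  exact ⟨And.left, fun h => ⟨h, Or.inl (by simp)⟩⟩

lemma mem_labels_encR {u t : Node} {i : ℕ} :
    t ∈ (T.encR (u ++ [i])).labels ↔ t ∈ T.dom ∧ ∃ j, i < j ∧ u ++ [j] <+: t := by
  rw [encR_concat, mem_labels_enc, below_succ]

lemma mem_labels_child {s t : Node} :
    t ∈ (T.enc (s ++ [0])).labels ↔ t ∈ T.dom ∧ ∃ j, s ++ [j] <+: t := by
  rw [mem_labels_enc, below_child]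

lemma sib_prefix_inj {u t : Node} {i j : ℕ} (h1 : u ++ [i] <+: t) (h2 : u ++ [j] <+: t) :
    i = j := by
  obtain ⟨w, rfl⟩ := h1
  obtain ⟨w', h⟩ := h2
  simp at h
  exact h.1.symm

lemma not_mem_enc_child (s : Node) : s ∉ (T.enc (s ++ [0])).labels := by
  rw [mem_labels_child]
  rintro ⟨-, j, h⟩
  simpa using h.length_le

lemma not_mem_encR (s : Node) : s ∉ (T.encR s).labels := by
  rcases node_cases s with rfl | ⟨u, i, rfl⟩
  · simp [encR_nil]
  · rw [mem_labels_encR]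
    rintro ⟨-, j, h1, h2⟩
    exact absurd (sib_prefix_inj h2 List.prefix_rfl) (by omega)

lemma disjoint_enc (s : Node) : Disjoint (T.enc (s ++ [0])).labels (T.encR s).labels := by
  rw [Set.disjoint_left]
  intro t h1 h2
  rw [mem_labels_child] at h1
  obtain ⟨-, k, h1⟩ := h1
  rcases node_cases s with rfl | ⟨u, i, rfl⟩
  · simp [encR_nil] at h2
  · rw [mem_labels_encR] at h2
    obtain ⟨-, j, h3, h4⟩ := h2
    exact absurd (sib_prefix_inj h4 ((List.prefix_append _ _).trans h1)) (by omega)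

lemma distinct_enc (s : Node) : (T.enc s).Distinct :=
  enc_induction trivial
    (fun s _ h1 h2 => ⟨not_mem_enc_child s, not_mem_encR s, disjoint_enc s, h1, h2⟩) s

end UTree

/-! ### Finite algebras recognizing tree properties -/

/-- Names for first-order (`Sum.inl`) and set (`Sum.inr`) variables. -/
abbrev Vr : Type := ℕ ⊕ ℕ

/-- A deterministic bottom-up automaton (without acceptance condition) on binary trees
whose inner vertices carry a letter and a set of variables. -/
structure Alg (A S : Type) where
  empty : S
  step : A → Set Vr → S → S → S

namespace Alg

variable {A S S' : Type}

/-- The state reached at the top of a binary tree; `lab` gives the letter of a node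
and `W` the set of variables whose value contains it. -/
def run (M : Alg A S) (lab : Node → A) (W : Node → Set Vr) : BT → S
  | .nil => M.empty
  | .node s l r => M.step (lab s) (W s) (M.run lab W l) (M.run lab W r)

lemma run_congr (M : Alg A S) {lab : Node → A} {W W' : Node → Set Vr} {t : BT}
    (h : ∀ s ∈ t.labels, W s = W' s) : M.run lab W t = M.run lab W' t := by
  induction t with
  | nil => rfl
  | node s l r ihl ihr =>
    simp only [run]
    rw [h s (by simp), ihl fun s hs => h s (by simp [hs]), ihr fun s hs => h s (by simp [hs])]

/-- The product of two algebras. -/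
def prod (M : Alg A S) (N : Alg A S') : Alg A (S × S') where
  empty := (M.empty, N.empty)
  step a P l r := (M.step a P l.1 r.1, N.step a P l.2 r.2)

lemma run_prod (M : Alg A S) (N : Alg A S') (lab : Node → A) (W : Node → Set Vr) (t : BT) :
    (M.prod N).run lab W t = (M.run lab W t, N.run lab W t) := by
  induction t with
  | nil => rfl
  | node s l r ihl ihr => simp only [run, ihl, ihr]; rfl

end Alg

/-- The set `P` with membership of `i` replaced by the truth value `b`. -/
def setBit (P : Set Vr) (i : Vr) (b : Prop) : Set Vr := {j | (j = i ∧ b) ∨ (j ≠ i ∧ j ∈ P)}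

/-- The annotation `W` with the value of the variable `i` replaced by the set `Z`. -/
def updAnn (W : Node → Set Vr) (i : Vr) (Z : Set Node) : Node → Set Vr :=
  fun s => setBit (W s) i (s ∈ Z)

namespace Alg

variable {A S : Type}

/-- The subset construction guessing the value of the variable `i`. -/
def power (M : Alg A S) (i : Vr) : Alg A (Set S) where
  empty := {M.empty}
  step a P X Y := {q | ∃ b : Prop, ∃ x ∈ X, ∃ y ∈ Y, q = M.step a (setBit P i b) x y}

lemma mem_run_power (M : Alg A S) (i : Vr) (lab : Node → A) (W : Node → Set Vr) {t : BT}
    (ht : t.Distinct) (q : S) :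
    q ∈ (M.power i).run lab W t ↔ ∃ Z ⊆ t.labels, q = M.run lab (updAnn W i Z) t := by
  induction t generalizing q with
  | nil =>
    refine ⟨fun h => ⟨∅, Set.empty_subset _, h⟩, ?_⟩
    rintro ⟨Z, -, h⟩
    exact h
  | node s l r ihl ihr =>
    obtain ⟨h1, h2, h3, h4, h5⟩ := ht
    have hstep : q ∈ (M.power i).run lab W (.node s l r) ↔
        ∃ b : Prop, ∃ x ∈ (M.power i).run lab W l, ∃ y ∈ (M.power i).run lab W r,
          q = M.step (lab s) (setBit (W s) i b) x y := Iff.rfl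
    rw [hstep]
    constructor
    · rintro ⟨b, x, hx, y, hy, rfl⟩
      obtain ⟨Z1, hZ1, rfl⟩ := (ihl h4 x).1 hx
      obtain ⟨Z2, hZ2, rfl⟩ := (ihr h5 y).1 hy
      rw [Set.disjoint_left] at h3
      refine ⟨{t | (t = s ∧ b) ∨ t ∈ Z1 ∨ t ∈ Z2}, ?_, ?_⟩
      · rintro t (⟨rfl, -⟩ | h | h)
        · simp
        · simp [hZ1 h]
        · simp [hZ2 h]
      · simp only [run]
        congr 1
        · simp only [updAnn]
          congr 1
          have hs1 : s ∉ Z1 := fun h => h1 (hZ1 h)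
          have hs2 : s ∉ Z2 := fun h => h2 (hZ2 h)
          simp [hs1, hs2]
        · refine run_congr M fun t ht => ?_
          simp only [updAnn]
          congr 1
          have : t ≠ s := by rintro rfl; exact h1 ht
          have : t ∉ Z2 := fun h => h3 ht (hZ2 h)
          simp [*]
        · refine run_congr M fun t ht => ?_
          simp only [updAnn]
          congr 1
          have : t ≠ s := by rintro rfl; exact h2 ht
          have : t ∉ Z1 := fun h => h3 (hZ1 h) ht
          simp [*]
    · rintro ⟨Z, -, rfl⟩
      refine ⟨s ∈ Z, _, (ihl h4 _).2 ⟨Z ∩ l.labels, Set.inter_subset_right, rfl⟩, _,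
        (ihr h5 _).2 ⟨Z ∩ r.labels, Set.inter_subset_right, rfl⟩, ?_⟩
      simp only [run]
      congr 1
      · refine run_congr M fun t ht => ?_
        simp [updAnn, ht]
      · refine run_congr M fun t ht => ?_
        simp [updAnn, ht]

end Alg

/-- A property of annotated trees is recognizable if it can be read off from the state
that a finite algebra reaches on the binary encoding. -/
def Recognizable {A : Type} (R : UTree A → (Node → Set Vr) → Prop) : Prop :=
  ∃ (S : Type) (_ : Finite S) (M : Alg A S) (acc : Set S),
    ∀ T W, R T W ↔ M.run T.label W (T.enc []) ∈ acc

namespace Recognizable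

variable {A : Type} {R R' : UTree A → (Node → Set Vr) → Prop}

lemma compl (h : Recognizable R) : Recognizable fun T W => ¬ R T W := by
  obtain ⟨S, hS, M, acc, h⟩ := h
  exact ⟨S, hS, M, accᶜ, fun T W => (not_congr (h T W)).trans Iff.rfl⟩

lemma inter (h : Recognizable R) (h' : Recognizable R') :
    Recognizable fun T W => R T W ∧ R' T W := by
  obtain ⟨S, hS, M, acc, h⟩ := h
  obtain ⟨S', hS', M', acc', h'⟩ := h'
  exact ⟨S × S', inferInstance, M.prod M', acc ×ˢ acc', fun T W => by
    simp only [h, h', Alg.run_prod, Set.mem_prod]⟩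

lemma proj (h : Recognizable R) (i : Vr) :
    Recognizable fun T W => ∃ Z : Set Node, Z ⊆ ↑T.dom ∧ R T (updAnn W i Z) := by
  obtain ⟨S, hS, M, acc, h⟩ := h
  refine ⟨Set S, inferInstance, M.power i, {X | ∃ q ∈ X, q ∈ acc}, fun T W => ?_⟩
  have hd : (T.enc []).labels = ↑T.dom := Set.ext fun t => UTree.mem_labels_root
  simp only [h, Set.mem_ofPred_eq, Alg.mem_run_power M i _ _ (UTree.distinct_enc []), hd]
  constructor
  · rintro ⟨Z, h1, h2⟩
    exact ⟨_, ⟨Z, h1, rfl⟩, h2⟩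
  · rintro ⟨_, ⟨Z, h1, rfl⟩, h2⟩
    exact ⟨Z, h1, h2⟩

/-- Existence of a node satisfying a condition on its letter and its variables. -/
lemma exists_node (p : A → Set Vr → Prop) :
    Recognizable fun (T : UTree A) W => ∃ s ∈ T.dom, p (T.label s) (W s) := by
  let M : Alg A Prop := ⟨False, fun a P l r => p a P ∨ l ∨ r⟩
  refine ⟨Prop, inferInstance, M, {q | q}, fun T W => ?_⟩
  have key : ∀ t : BT, M.run T.label W t ↔ ∃ s ∈ t.labels, p (T.label s) (W s) := by
    intro t
    induction t with
    | nil => simp [Alg.run, M]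
    | node s l r ihl ihr =>
      have : M.run T.label W (.node s l r) ↔
        (p (T.label s) (W s) ∨ M.run T.label W l ∨ M.run T.label W r) := Iff.rfl
      rw [this, ihl, ihr]
      simp only [BT.mem_labels_node]
      grind
  change _ ↔ M.run T.label W (T.enc [])
  simp only [key, UTree.mem_labels_root]

/-- The variable `i` holds at the root. -/
lemma at_root (i : Vr) : Recognizable fun (_ : UTree A) W => i ∈ W [] := by
  let M : Alg A Prop := ⟨False, fun _ P _ _ => i ∈ P⟩
  refine ⟨Prop, inferInstance, M, {q | q}, fun T W => ?_⟩
  rw [UTree.enc_of_mem T.nil_mem]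
  rfl

/-- The variable `i` holds at no two distinct nodes. -/
lemma subsingleton (i : Vr) : Recognizable fun (T : UTree A) W =>
    ∀ s ∈ T.dom, ∀ t ∈ T.dom, i ∈ W s → i ∈ W t → s = t := by
  -- the state records whether `i` holds somewhere and whether it holds at most once
  let M : Alg A (Prop × Prop) := ⟨(False, True), fun _ P l r =>
    (i ∈ P ∨ l.1 ∨ r.1, l.2 ∧ r.2 ∧ ¬ (i ∈ P ∧ (l.1 ∨ r.1)) ∧ ¬ (l.1 ∧ r.1))⟩
  refine ⟨Prop × Prop, inferInstance, M, {q | q.2}, fun T W => ?_⟩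
  have key : ∀ t : BT, t.Distinct → ((M.run T.label W t).1 ↔ ∃ s ∈ t.labels, i ∈ W s) ∧
      ((M.run T.label W t).2 ↔
        ∀ s ∈ t.labels, ∀ s' ∈ t.labels, i ∈ W s → i ∈ W s' → s = s') := by
    intro t ht
    induction t with
    | nil => simp [Alg.run, M]
    | node s l r ihl ihr =>
      obtain ⟨h1, h2, h3, h4, h5⟩ := ht
      obtain ⟨hl1, hl2⟩ := ihl h4
      obtain ⟨hr1, hr2⟩ := ihr h5
      rw [Set.disjoint_left] at h3
      have e1 : (M.run T.label W (.node s l r)).1 ↔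
        (i ∈ W s ∨ (M.run T.label W l).1 ∨ (M.run T.label W r).1) := Iff.rfl
      have e2 : (M.run T.label W (.node s l r)).2 ↔
        ((M.run T.label W l).2 ∧ (M.run T.label W r).2 ∧
          ¬ (i ∈ W s ∧ ((M.run T.label W l).1 ∨ (M.run T.label W r).1)) ∧
          ¬ ((M.run T.label W l).1 ∧ (M.run T.label W r).1)) := Iff.rfl
      rw [e1, e2, hl1, hl2, hr1, hr2]
      simp only [BT.mem_labels_node]
      refine ⟨by grind, ?_, ?_⟩
      · rintro ⟨a1, a2, a3, a4⟩ x (rfl | hx | hx) y (rfl | hy | hy) h6 h7 <;> grind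
      · intro h
        refine ⟨fun x hx y hy => h x (by simp [hx]) y (by simp [hy]),
          fun x hx y hy => h x (by simp [hx]) y (by simp [hy]), ?_, ?_⟩
        · rintro ⟨h6, ⟨y, h7, h8⟩ | ⟨y, h7, h8⟩⟩
          · exact h1 (h s (by simp) y (by simp [h7]) h6 h8 ▸ h7)
          · exact h2 (h s (by simp) y (by simp [h7]) h6 h8 ▸ h7)
        · rintro ⟨⟨x, h6, h7⟩, y, h8, h9⟩
          exact h3 h6 (h x (by simp [h6]) y (by simp [h8]) h7 h9 ▸ h8)
  change _ ↔ (M.run T.label W (T.enc [])).2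
  simp only [(key _ (UTree.distinct_enc [])).2, UTree.mem_labels_root]

/-- Some node in `y` is a descendant of some node in `x`. -/
lemma descendant (x y : Vr) : Recognizable fun (T : UTree A) W =>
    ∃ s ∈ T.dom, x ∈ W s ∧ ∃ t ∈ T.dom, s <+: t ∧ y ∈ W t := by
  -- the proper descendants of a node are the nodes of its left subtree
  let M : Alg A (Prop × Prop) := ⟨(False, False), fun _ P l r =>
    (y ∈ P ∨ l.1 ∨ r.1, (x ∈ P ∧ (y ∈ P ∨ l.1)) ∨ l.2 ∨ r.2)⟩
  refine ⟨Prop × Prop, inferInstance, M, {q | q.2}, fun T W => ?_⟩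
  have key : ∀ s, ((M.run T.label W (T.enc s)).1 ↔ ∃ t ∈ (T.enc s).labels, y ∈ W t) ∧
      ((M.run T.label W (T.enc s)).2 ↔
        ∃ p ∈ (T.enc s).labels, x ∈ W p ∧ ∃ t ∈ T.dom, p <+: t ∧ y ∈ W t) := by
    refine UTree.enc_induction (motive := fun b =>
      ((M.run T.label W b).1 ↔ ∃ t ∈ b.labels, y ∈ W t) ∧
      ((M.run T.label W b).2 ↔
        ∃ p ∈ b.labels, x ∈ W p ∧ ∃ t ∈ T.dom, p <+: t ∧ y ∈ W t)) (by simp [Alg.run, M]) ?_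
    rintro s hs ⟨hl1, hl2⟩ ⟨hr1, hr2⟩
    have e1 : (M.run T.label W (.node s (T.enc (s ++ [0])) (T.encR s))).1 ↔
        (y ∈ W s ∨ (M.run T.label W (T.enc (s ++ [0]))).1 ∨
          (M.run T.label W (T.encR s)).1) := Iff.rfl
    have e2 : (M.run T.label W (.node s (T.enc (s ++ [0])) (T.encR s))).2 ↔
        ((x ∈ W s ∧ (y ∈ W s ∨ (M.run T.label W (T.enc (s ++ [0]))).1)) ∨
          (M.run T.label W (T.enc (s ++ [0]))).2 ∨ (M.run T.label W (T.encR s)).2) := Iff.rfl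
    have e3 : (∃ t ∈ T.dom, s <+: t ∧ y ∈ W t) ↔
        (y ∈ W s ∨ ∃ t ∈ (T.enc (s ++ [0])).labels, y ∈ W t) := by
      simp only [UTree.mem_labels_child, UTree.prefix_iff_eq_or (s := s)]
      grind
    rw [e1, e2, hl1, hl2, hr1, hr2, ← e3]
    simp only [BT.mem_labels_node, or_and_right, exists_or, exists_eq_left, and_self]
  change _ ↔ (M.run T.label W (T.enc [])).2
  simp only [(key []).2, UTree.mem_labels_root]

end Recognizable

namespace UTree

variable {A : Type} {T : UTree A}

/-- The node `t` is `s` or a later sibling of `s`; unlike `sibR` this includes the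
case of the root. -/
def Spine (T : UTree A) (s t : Node) : Prop := s ∈ T.dom ∧ (t = s ∨ T.sibR s t)

lemma spine_nil {t : Node} : T.Spine [] t ↔ t = [] := by
  simp [Spine, sibR, T.nil_mem]

lemma spine_concat {u t : Node} {i : ℕ} (h : u ++ [i] ∈ T.dom) :
    T.Spine (u ++ [i]) t ↔ t = u ++ [i] ∨ T.Spine (u ++ [i + 1]) t := by
  constructor
  · rintro ⟨-, h1 | ⟨-, h2, u', i', j, h3, rfl, h4⟩⟩
    · exact Or.inl h1
    · obtain ⟨rfl, h5⟩ := List.append_inj' h3 rfl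
      simp at h5
      subst h5
      rcases eq_or_lt_of_le h4 with rfl | h4
      · exact Or.inl rfl
      · have := sib_mem h2 (i := i + 1) h4
        exact Or.inr ⟨this, Or.inr ⟨this, h2, u, i + 1, j, rfl, rfl, h4⟩⟩
  · rintro (rfl | ⟨h1, rfl | ⟨-, h2, u', i', j, h3, rfl, h4⟩⟩)
    · exact ⟨h, Or.inl rfl⟩
    · exact ⟨h, Or.inr ⟨h, h1, u, i, i + 1, rfl, rfl, by omega⟩⟩
    · obtain ⟨rfl, h5⟩ := List.append_inj' h3 rfl
      simp at h5
      exact ⟨h, Or.inr ⟨h, h2, u, i, j, rfl, rfl, by omega⟩⟩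

end UTree

namespace Recognizable

variable {A : Type}

/-- Some node in `y` is equal to or a later sibling of some node in `x`. -/
lemma spine (x y : Vr) : Recognizable fun (T : UTree A) W =>
    ∃ s ∈ T.dom, x ∈ W s ∧ ∃ t, T.Spine s t ∧ y ∈ W t := by
  -- the first component says that `y` holds on the rightmost branch
  let M : Alg A (Prop × Prop) := ⟨(False, False), fun _ P l r =>
    (y ∈ P ∨ r.1, (x ∈ P ∧ (y ∈ P ∨ r.1)) ∨ l.2 ∨ r.2)⟩
  refine ⟨Prop × Prop, inferInstance, M, {q | q.2}, fun T W => ?_⟩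
  have e1 : ∀ s l r, (M.run T.label W (.node s l r)).1 ↔
      (y ∈ W s ∨ (M.run T.label W r).1) := fun _ _ _ => Iff.rfl
  have e2 : ∀ s l r, (M.run T.label W (.node s l r)).2 ↔
      ((x ∈ W s ∧ (y ∈ W s ∨ (M.run T.label W r).1)) ∨
        (M.run T.label W l).2 ∨ (M.run T.label W r).2) := fun _ _ _ => Iff.rfl
  have key1 : ∀ s, (M.run T.label W (T.enc s)).1 ↔ ∃ t, T.Spine s t ∧ y ∈ W t := by
    intro s
    induction hn : (T.dom.filter (s ≤ ·)).card using Nat.strong_induction_on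
      generalizing s with
    | _ n ih =>
      by_cases h : s ∈ T.dom
      · rw [UTree.enc_of_mem h, e1]
        rcases node_cases s with rfl | ⟨u, i, rfl⟩
        · simp [UTree.encR_nil, UTree.spine_nil, Alg.run, M]
        · rw [UTree.encR_concat, ih _ (hn ▸ T.card_filter_lt h (append_lt_succ u i)) _ rfl]
          simp only [UTree.spine_concat h]
          grind
      · rw [UTree.enc_of_not_mem h]
        refine ⟨fun h => h.elim, ?_⟩
        rintro ⟨t, h1, -⟩
        exact h h1.1
  have key : ∀ s, ((M.run T.label W (T.enc s)).2 ↔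
        ∃ p ∈ (T.enc s).labels, x ∈ W p ∧ ∃ t, T.Spine p t ∧ y ∈ W t) := by
    refine UTree.enc_induction (motive := fun b =>
      ((M.run T.label W b).2 ↔
        ∃ p ∈ b.labels, x ∈ W p ∧ ∃ t, T.Spine p t ∧ y ∈ W t)) (by simp [Alg.run, M]) ?_
    rintro s hs hl2 hr2
    have e3 := key1 s
    rw [UTree.enc_of_mem hs, e1] at e3
    rw [e2, e3, hl2, hr2]
    simp only [BT.mem_labels_node]
    grind
  change _ ↔ (M.run T.label W (T.enc [])).2
  simp only [key [], UTree.mem_labels_root]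

end Recognizable

/-! ### MSO formulas are recognizable -/

/-- The annotation of the nodes that corresponds to a valuation. -/
def ann (v : ℕ → Node) (V : ℕ → Set Node) (s : Node) : Set Vr :=
  {j | Sum.elim (fun n => v n = s) (fun n => s ∈ V n) j}

@[simp] lemma inl_mem_ann {v : ℕ → Node} {V : ℕ → Set Node} {s : Node} {n : ℕ} :
    Sum.inl n ∈ ann v V s ↔ v n = s := Iff.rfl

@[simp] lemma inr_mem_ann {v : ℕ → Node} {V : ℕ → Set Node} {s : Node} {n : ℕ} :
    Sum.inr n ∈ ann v V s ↔ s ∈ V n := Iff.rfl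

lemma mem_updAnn {W : Node → Set Vr} {i j : Vr} {Z : Set Node} {s : Node} :
    j ∈ updAnn W i Z s ↔ (j = i ∧ s ∈ Z) ∨ (j ≠ i ∧ j ∈ W s) := Iff.rfl

lemma updAnn_inr (v : ℕ → Node) (V : ℕ → Set Node) (n : ℕ) (Z : Set Node) :
    updAnn (ann v V) (.inr n) Z = ann v (Function.update V n Z) := by
  funext s
  ext j
  rw [mem_updAnn]
  cases j with
  | inl m => simp
  | inr m => by_cases h : m = n <;> simp [h, Function.update]

lemma updAnn_inl (v : ℕ → Node) (V : ℕ → Set Node) (n : ℕ) (z : Node) :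
    updAnn (ann v V) (.inl n) {z} = ann (Function.update v n z) V := by
  funext s
  ext j
  rw [mem_updAnn]
  cases j with
  | inr m => simp
  | inl m => by_cases h : m = n <;> simp [h, Function.update, eq_comm (a := s)]

/-- Every MSO formula is recognizable, for valuations of the first-order variables in
the tree. -/
theorem recognizable_sat {A : Type} (φ : MSO A) :
    ∃ R : UTree A → (Node → Set Vr) → Prop, Recognizable R ∧
      ∀ (T : UTree A) (v : ℕ → Node) (V : ℕ → Set Node), (∀ n, v n ∈ T.dom) →
        (MSO.Sat T v V φ ↔ R T (ann v V)) := by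
  induction φ with
  | eq x y =>
    refine ⟨_, .exists_node fun _ P => .inl x ∈ P ∧ .inl y ∈ P, fun T v V hv => ?_⟩
    have := hv x
    simp [MSO.Sat, hv, eq_comm]
  | desc x y =>
    refine ⟨_, .descendant (.inl x) (.inl y), fun T v V hv => ?_⟩
    simp [MSO.Sat, UTree.descR, hv]
  | sib x y =>
    refine ⟨_, .inter (.spine (.inl x) (.inl y)) (.compl (.at_root (.inl x))),
      fun T v V hv => ?_⟩
    simp only [MSO.Sat, inl_mem_ann, ↓existsAndEq, hv, true_and, and_true, UTree.Spine]
    constructor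
    · intro h
      refine ⟨Or.inr h, fun h0 => ?_⟩
      rw [h0] at h
      simp [UTree.sibR] at h
    · rintro ⟨h | h, h0⟩
      · obtain ⟨u, i, hu⟩ := (node_cases (v x)).resolve_left h0
        exact ⟨hv x, hv y, u, i, i, hu, h.trans hu, le_rfl⟩
      · exact h
  | lab a x =>
    refine ⟨_, .exists_node fun b P => .inl x ∈ P ∧ b = a, fun T v V hv => ?_⟩
    simp [MSO.Sat, hv]
  | mem X x =>
    refine ⟨_, .exists_node fun _ P => .inl x ∈ P ∧ .inr X ∈ P, fun T v V hv => ?_⟩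
    simp [MSO.Sat, hv]
  | not φ ih =>
    obtain ⟨R, hR, h⟩ := ih
    exact ⟨_, hR.compl, fun T v V hv => by rw [← h T v V hv]; rfl⟩
  | and φ ψ ihφ ihψ =>
    obtain ⟨R, hR, h⟩ := ihφ
    obtain ⟨R', hR', h'⟩ := ihψ
    exact ⟨_, hR.inter hR', fun T v V hv => by rw [← h T v V hv, ← h' T v V hv]; rfl⟩
  | exFO n φ ih =>
    obtain ⟨R, hR, h⟩ := ih
    -- a first-order quantifier ranges over the singletons
    refine ⟨_, (hR.inter ((Recognizable.exists_node fun _ P => .inl n ∈ P).inter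
      (.subsingleton (.inl n)))).proj (.inl n), fun T v V hv => ?_⟩
    have hupd : ∀ z ∈ T.dom, ∀ m, Function.update v n z m ∈ T.dom := by
      intro z hz m
      rcases eq_or_ne m n with rfl | hne
      · simpa using hz
      · simpa [hne] using hv m
    have hmem : ∀ Z s, (Sum.inl n : Vr) ∈ updAnn (ann v V) (.inl n) Z s ↔ s ∈ Z := by
      intro Z s
      simp [mem_updAnn]
    simp only [MSO.Sat, hmem]
    constructor
    · rintro ⟨z, hz, h1⟩
      refine ⟨{z}, by simpa using hz, ?_, ⟨z, hz, rfl⟩, ?_⟩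
      · rw [updAnn_inl, ← h T _ V (hupd z hz)]
        exact h1
      · rintro s - t - rfl rfl
        rfl
    · rintro ⟨Z, hZ, h1, ⟨z, hz, hzZ⟩, h2⟩
      have : Z = {z} := Set.ext fun s =>
        ⟨fun hs => h2 s (hZ hs) z hz hs hzZ, by rintro rfl; exact hzZ⟩
      subst this
      rw [updAnn_inl, ← h T _ V (hupd z hz)] at h1
      exact ⟨z, hz, h1⟩
  | exSO n φ ih =>
    obtain ⟨R, hR, h⟩ := ih
    refine ⟨_, hR.proj (.inr n), fun T v V hv => ?_⟩
    simp only [MSO.Sat, updAnn_inr, ← h T v _ hv]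

/-! ### Simulating a finite algebra in monadic datalog -/

/-- Intensional predicates of the simulating program.  At a node `s`, `up q`, `left q` and
`right q` say that `q` is the state reached without variables on the encoding of `s`, on its
left subtree and on its right subtree; `ctx C` says that `C` is the set of states which,
when reached at `s`, lead to acceptance of the whole tree; `out` is the output. -/
inductive Pr (S : Type) : Type where
  | up : S → Pr S
  | left : S → Pr S
  | right : S → Pr S
  | ctx : Set S → Pr S
  | out : Pr S

instance {S : Type} [Finite S] : Finite (Pr S) := by
  let f : S ⊕ S ⊕ S ⊕ Set S ⊕ Unit → Pr S :=
    Sum.elim .up (Sum.elim .left (Sum.elim .right (Sum.elim .ctx fun _ => .out)))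
  refine Finite.of_surjective f fun p => ?_
  cases p with
  | up q => exact ⟨.inl q, rfl⟩
  | left q => exact ⟨.inr (.inl q), rfl⟩
  | right q => exact ⟨.inr (.inr (.inl q)), rfl⟩
  | ctx C => exact ⟨.inr (.inr (.inr (.inl C))), rfl⟩
  | out => exact ⟨.inr (.inr (.inr (.inr ()))), rfl⟩

/-- The variables holding at the distinguished node: all first-order variables. -/
def marked : Set Vr := Set.range Sum.inl

/-- The valuation sending all first-order variables to `s` and all set variables to `∅`
marks exactly the node `s`. -/
lemma ann_const (s t : Node) :
    ann (fun _ => s) (fun _ => ∅) t = {j | j ∈ marked ∧ t = s} := by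
  ext j
  cases j with
  | inl n => simp [marked, eq_comm]
  | inr n => simp [marked]

namespace Alg

variable {A S : Type} (M : Alg A S) (acc : Set S)

/-- The context at the first child of a node with context `C` and letter `a`, where `r` is
the state of the right subtree. -/
def ctxLeft (C : Set S) (a : A) (r : S) : Set S := {q | M.step a ∅ q r ∈ C}

/-- The context at the next sibling of a node with context `C` and letter `a`, where `l` is
the state of the left subtree. -/
def ctxRight (C : Set S) (a : A) (l : S) : Set S := {q | M.step a ∅ l q ∈ C}

/-- The rules of the simulating program. -/
inductive IsRule : DRule A (Pr S) → Prop
  | leaf : IsRule ⟨.left M.empty, 0, [.leaf 0], by simp [DAtom.vars]⟩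
  | first (q : S) : IsRule ⟨.left q, 0, [.fc 0 1, .idb (.up q) 1], by simp [DAtom.vars]⟩
  | last : IsRule ⟨.right M.empty, 0, [.lastChild 0], by simp [DAtom.vars]⟩
  | root : IsRule ⟨.right M.empty, 0, [.root 0], by simp [DAtom.vars]⟩
  | next (q : S) : IsRule ⟨.right q, 0, [.ns 0 1, .idb (.up q) 1], by simp [DAtom.vars]⟩
  | up (a : A) (l r : S) : IsRule ⟨.up (M.step a ∅ l r), 0,
      [.lab a 0, .idb (.left l) 0, .idb (.right r) 0], by simp [DAtom.vars]⟩
  | ctxRoot : IsRule ⟨.ctx acc, 0, [.root 0], by simp [DAtom.vars]⟩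
  | ctxFirst (C : Set S) (a : A) (r : S) : IsRule ⟨.ctx (M.ctxLeft C a r), 1,
      [.fc 0 1, .idb (.ctx C) 0, .lab a 0, .idb (.right r) 0], by simp [DAtom.vars]⟩
  | ctxNext (C : Set S) (a : A) (l : S) : IsRule ⟨.ctx (M.ctxRight C a l), 1,
      [.ns 0 1, .idb (.ctx C) 0, .lab a 0, .idb (.left l) 0], by simp [DAtom.vars]⟩
  | out (C : Set S) (a : A) (l r : S) (h : M.step a marked l r ∈ C) : IsRule ⟨.out, 0,
      [.lab a 0, .idb (.ctx C) 0, .idb (.left l) 0, .idb (.right r) 0], by simp [DAtom.vars]⟩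

lemma finite_isRule [Finite A] [Finite S] : {r | M.IsRule acc r}.Finite := by
  refine Set.Finite.subset (s := {r : DRule A (Pr S) |
    r = ⟨.left M.empty, 0, [.leaf 0], by simp [DAtom.vars]⟩ ∨
    r = ⟨.right M.empty, 0, [.lastChild 0], by simp [DAtom.vars]⟩ ∨
    r = ⟨.right M.empty, 0, [.root 0], by simp [DAtom.vars]⟩ ∨
    r = ⟨.ctx acc, 0, [.root 0], by simp [DAtom.vars]⟩} ∪
    (Set.range (fun q : S => ⟨.left q, 0, [.fc 0 1, .idb (.up q) 1], by simp [DAtom.vars]⟩) ∪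
    (Set.range (fun q : S => ⟨.right q, 0, [.ns 0 1, .idb (.up q) 1], by simp [DAtom.vars]⟩) ∪
    (Set.range (fun x : A × S × S => ⟨.up (M.step x.1 ∅ x.2.1 x.2.2), 0,
      [.lab x.1 0, .idb (.left x.2.1) 0, .idb (.right x.2.2) 0], by simp [DAtom.vars]⟩) ∪
    (Set.range (fun x : Set S × A × S => ⟨.ctx (M.ctxLeft x.1 x.2.1 x.2.2), 1,
      [.fc 0 1, .idb (.ctx x.1) 0, .lab x.2.1 0, .idb (.right x.2.2) 0],
      by simp [DAtom.vars]⟩) ∪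
    (Set.range (fun x : Set S × A × S => ⟨.ctx (M.ctxRight x.1 x.2.1 x.2.2), 1,
      [.ns 0 1, .idb (.ctx x.1) 0, .lab x.2.1 0, .idb (.left x.2.2) 0],
      by simp [DAtom.vars]⟩) ∪
    Set.range (fun x : Set S × A × S × S => ⟨.out, 0, [.lab x.2.1 0, .idb (.ctx x.1) 0,
      .idb (.left x.2.2.1) 0, .idb (.right x.2.2.2) 0], by simp [DAtom.vars]⟩)))))))
    ?_ ?_
  · refine Set.Finite.union ?_ (Set.toFinite _)
    simp only [Set.ofPred_or, Set.ofPred_eq_eq_singleton]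
    exact Set.toFinite _
  · rintro r hr
    cases hr with
    | leaf => exact .inl (.inl rfl)
    | last => exact .inl (.inr (.inl rfl))
    | root => exact .inl (.inr (.inr (.inl rfl)))
    | ctxRoot => exact .inl (.inr (.inr (.inr rfl)))
    | first q => exact .inr (.inl ⟨q, rfl⟩)
    | next q => exact .inr (.inr (.inl ⟨q, rfl⟩))
    | up a l r => exact .inr (.inr (.inr (.inl ⟨(a, l, r), rfl⟩)))
    | ctxFirst C a r => exact .inr (.inr (.inr (.inr (.inl ⟨(C, a, r), rfl⟩))))
    | ctxNext C a l => exact .inr (.inr (.inr (.inr (.inr (.inl ⟨(C, a, l), rfl⟩)))))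
    | out C a l r h => exact .inr (.inr (.inr (.inr (.inr (.inr ⟨(C, a, l, r), rfl⟩)))))

/-- The meaning of the intensional predicates at a node `s`. -/
def Sem (T : UTree A) : Pr S → Node → Prop
  | .up q, s => M.run T.label (fun _ => ∅) (T.enc s) = q
  | .left q, s => M.run T.label (fun _ => ∅) (T.enc (s ++ [0])) = q
  | .right q, s => M.run T.label (fun _ => ∅) (T.encR s) = q
  | .ctx C, s => ∀ W : Node → Set Vr, (∀ t, t ∉ (T.enc s).labels → W t = ∅) →
      (M.run T.label W (T.enc []) ∈ acc ↔ M.run T.label W (T.enc s) ∈ C)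
  | .out, s => M.run T.label (ann (fun _ => s) fun _ => ∅) (T.enc []) ∈ acc

variable {M acc} {T : UTree A} {P : List (DRule A (Pr S))}

lemma run_enc {W : Node → Set Vr} {s : Node} (hs : s ∈ T.dom) :
    M.run T.label W (T.enc s) = M.step (T.label s) (W s)
      (M.run T.label W (T.enc (s ++ [0]))) (M.run T.label W (T.encR s)) := by
  rw [UTree.enc_of_mem hs]; rfl

/-- Every derivable fact is true under the intended meaning. -/
lemma sem_of_derives (hP : ∀ r, r ∈ P ↔ M.IsRule acc r) {p : Pr S} {s : Node}
    (h : Derives T P p s) : M.Sem acc T p s := by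
  induction h with
  | step r hr σ hσ hext hidb ih =>
    clear hidb
    rw [hP] at hr
    cases hr with
    | leaf =>
      have h1 : T.isLeaf (σ 0) := hext (.leaf 0) (by simp)
      change M.run _ _ (T.enc (σ 0 ++ [0])) = _
      rw [UTree.enc_of_not_mem (h1.2 0)]
      rfl
    | first q =>
      obtain ⟨-, -, h1⟩ : T.firstChildR (σ 0) (σ 1) := hext (.fc 0 1) (by simp)
      have h2 := ih (.up q) 1 (by simp)
      change M.run _ _ (T.enc (σ 0 ++ [0])) = _
      rw [← h1]
      exact h2
    | last =>
      obtain ⟨-, u, i, h1, h2⟩ : DAtom.lastChildP T (σ 0) := hext (.lastChild 0) (by simp)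
      change M.run _ _ (T.encR (σ 0)) = _
      rw [h1, UTree.encR_concat, UTree.enc_of_not_mem h2]
      rfl
    | root =>
      have h1 : σ 0 = [] := hext (.root 0) (by simp)
      change M.run _ _ (T.encR (σ 0)) = _
      rw [h1, UTree.encR_nil]
      rfl
    | next q =>
      obtain ⟨-, -, u, i, h1, h2⟩ : T.nsR (σ 0) (σ 1) := hext (.ns 0 1) (by simp)
      have h3 := ih (.up q) 1 (by simp)
      change M.run _ _ (T.encR (σ 0)) = _
      rw [h1, UTree.encR_concat, ← h2]
      exact h3
    | up a l r =>
      obtain ⟨h1, h2⟩ : σ 0 ∈ T.dom ∧ T.label (σ 0) = a := hext (.lab a 0) (by simp)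
      have h3 := ih (.left l) 0 (by simp)
      have h4 := ih (.right r) 0 (by simp)
      change M.run _ _ (T.enc (σ 0)) = _
      rw [run_enc h1, h2]
      exact congrArg₂ _ h3 h4
    | ctxRoot =>
      have h1 : σ 0 = [] := hext (.root 0) (by simp)
      intro W _
      change _ ↔ M.run _ _ (T.enc (σ 0)) ∈ _
      rw [h1]
    | ctxFirst C a r =>
      obtain ⟨-, -, h1⟩ : T.firstChildR (σ 0) (σ 1) := hext (.fc 0 1) (by simp)
      obtain ⟨h2, h3⟩ : σ 0 ∈ T.dom ∧ T.label (σ 0) = a := hext (.lab a 0) (by simp)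
      have h4 := ih (.ctx C) 0 (by simp)
      have h5 : M.run _ _ (T.encR (σ 0)) = r := ih (.right r) 0 (by simp)
      intro W hW
      change ∀ t, t ∉ (T.enc (σ 1)).labels → W t = ∅ at hW
      change _ ↔ M.run _ _ (T.enc (σ 1)) ∈ _
      rw [h1] at hW ⊢
      rw [h4 W fun t ht => hW t fun h => ht (by rw [UTree.enc_of_mem h2]; simp [h]),
        run_enc h2, h3, hW _ (UTree.not_mem_enc_child _), ← h5,
        M.run_congr (t := T.encR (σ 0)) (W' := fun _ => ∅) fun t ht =>
          hW t fun h => Set.disjoint_left.1 (UTree.disjoint_enc _) h ht]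
      rfl
    | ctxNext C a l =>
      obtain ⟨-, -, u, i, h0, h1⟩ : T.nsR (σ 0) (σ 1) := hext (.ns 0 1) (by simp)
      obtain ⟨h2, h3⟩ : σ 0 ∈ T.dom ∧ T.label (σ 0) = a := hext (.lab a 0) (by simp)
      have h4 := ih (.ctx C) 0 (by simp)
      have h5 : M.run _ _ (T.enc (σ 0 ++ [0])) = l := ih (.left l) 0 (by simp)
      have h6 : T.enc (σ 1) = T.encR (σ 0) := by rw [h0, h1, UTree.encR_concat]
      intro W hW
      change ∀ t, t ∉ (T.enc (σ 1)).labels → W t = ∅ at hW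
      change _ ↔ M.run _ _ (T.enc (σ 1)) ∈ _
      rw [h6] at hW ⊢
      rw [h4 W fun t ht => hW t fun h => ht (by rw [UTree.enc_of_mem h2]; simp [h]),
        run_enc h2, h3, hW _ (UTree.not_mem_encR _), ← h5,
        M.run_congr (t := T.enc (σ 0 ++ [0])) (W' := fun _ => ∅) fun t ht =>
          hW t fun h => Set.disjoint_left.1 (UTree.disjoint_enc _) ht h]
      rfl
    | out C a l r h =>
      obtain ⟨h2, h3⟩ : σ 0 ∈ T.dom ∧ T.label (σ 0) = a := hext (.lab a 0) (by simp)
      have h4 := ih (.ctx C) 0 (by simp)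
      have h5 : M.run _ _ (T.enc (σ 0 ++ [0])) = l := ih (.left l) 0 (by simp)
      have h6 : M.run _ _ (T.encR (σ 0)) = r := ih (.right r) 0 (by simp)
      have hW : ∀ t, t ≠ σ 0 → ann (fun _ => σ 0) (fun _ => ∅) t = ∅ := fun t ht => by
        rw [ann_const]; simp [ht]
      have hW' : ann (fun _ => σ 0) (fun _ => ∅) (σ 0) = marked := by
        rw [ann_const]; simp
      refine (h4 _ fun t ht => hW t ?_).2 ?_
      · rintro rfl
        exact ht (by rw [UTree.enc_of_mem h2]; simp)
      · rw [run_enc h2, h3, hW',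
          M.run_congr (t := T.enc (σ 0 ++ [0])) (W' := fun _ => ∅) fun t ht => hW t
            (by rintro rfl; exact UTree.not_mem_enc_child _ ht),
          M.run_congr (t := T.encR (σ 0)) (W' := fun _ => ∅) fun t ht => hW t
            (by rintro rfl; exact UTree.not_mem_encR _ ht), h5, h6]
        exact h

/-- Application of a rule whose variables are among `0` and `1`. -/
lemma derives_rule (hP : ∀ r, r ∈ P ↔ M.IsRule acc r) {r : DRule A (Pr S)}
    (hr : M.IsRule acc r) {s t : Node} (hs : s ∈ T.dom) (ht : t ∈ T.dom)
    (hext : ∀ a ∈ r.body, DAtom.ExtHolds T (fun n => if n = 0 then s else t) a)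
    (hidb : ∀ i y, DAtom.idb i y ∈ r.body → Derives T P i (if y = 0 then s else t)) :
    Derives T P r.headPred (if r.headVar = 0 then s else t) :=
  Derives.step r ((hP r).2 hr) (fun n => if n = 0 then s else t)
    (fun n => by split_ifs <;> assumption) hext hidb

lemma derives_states (hP : ∀ r, r ∈ P ↔ M.IsRule acc r) {s : Node} (hs : s ∈ T.dom) :
    (∃ q, Derives T P (.up q) s) ∧ (∃ q, Derives T P (.left q) s) ∧
      ∃ q, Derives T P (.right q) s := by
  induction hn : (T.dom.filter (s ≤ ·)).card using Nat.strong_induction_on generalizing s with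
  | _ n ih =>
    have hl : ∃ q, Derives T P (.left q) s := by
      by_cases h0 : s ++ [0] ∈ T.dom
      · obtain ⟨q, hq⟩ := (ih _ (hn ▸ T.card_filter_lt hs (lt_append_zero s)) h0 rfl).1
        exact ⟨q, derives_rule hP (.first q) hs h0
          (by simp [DAtom.ExtHolds, UTree.firstChildR, hs, h0])
          (by simp only [List.mem_cons]; rintro i y (h | h | h) <;> simp_all)⟩
      · have hleaf : T.isLeaf s := ⟨hs, fun i hi => h0 (UTree.sib_mem hi (Nat.zero_le i))⟩
        exact ⟨M.empty, derives_rule hP .leaf hs hs (by simpa [DAtom.ExtHolds] using hleaf)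
          (by simp)⟩
    have hr : ∃ q, Derives T P (.right q) s := by
      rcases node_cases s with rfl | ⟨u, i, rfl⟩
      · exact ⟨M.empty, derives_rule hP .root hs hs (by simp [DAtom.ExtHolds]) (by simp)⟩
      · by_cases h0 : u ++ [i + 1] ∈ T.dom
        · obtain ⟨q, hq⟩ := (ih _ (hn ▸ T.card_filter_lt hs (append_lt_succ u i)) h0 rfl).1
          exact ⟨q, derives_rule hP (.next q) hs h0
            (by
              have : T.nsR (u ++ [i]) (u ++ [i + 1]) := ⟨hs, h0, u, i, rfl, rfl⟩
              simpa [DAtom.ExtHolds] using this)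
            (by simp only [List.mem_cons]; rintro i y (h | h | h) <;> simp_all)⟩
        · have hlast : DAtom.lastChildP T (u ++ [i]) := ⟨hs, u, i, rfl, h0⟩
          exact ⟨M.empty, derives_rule hP .last hs hs
            (by simpa [DAtom.ExtHolds] using hlast) (by simp)⟩
    refine ⟨?_, hl, hr⟩
    obtain ⟨l, hl⟩ := hl
    obtain ⟨r, hr⟩ := hr
    exact ⟨_, derives_rule hP (.up (T.label s) l r) hs hs (by simp [DAtom.ExtHolds, hs])
      (by simp only [List.mem_cons]; rintro i y (h | h | h | h) <;> simp_all)⟩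

lemma derives_ctx (hP : ∀ r, r ∈ P ↔ M.IsRule acc r) {s : Node} (hs : s ∈ T.dom) :
    ∃ C, Derives T P (.ctx C) s := by
  induction s using List.reverseRecOn with
  | nil => exact ⟨acc, derives_rule hP .ctxRoot hs hs (by simp [DAtom.ExtHolds]) (by simp)⟩
  | append_singleton u i ihu =>
    induction i with
    | zero =>
      have hu : u ∈ T.dom := T.prefix_closed hs (by simp)
      obtain ⟨C, hC⟩ := ihu hu
      obtain ⟨r, hr⟩ := (derives_states hP hu).2.2
      exact ⟨_, derives_rule hP (.ctxFirst C (T.label u) r) hu hs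
        (by simp [DAtom.ExtHolds, UTree.firstChildR, hs, hu])
        (by simp only [List.mem_cons]; rintro i y (h | h | h | h | h) <;> simp_all)⟩
    | succ i ihi =>
      have hi : u ++ [i] ∈ T.dom := UTree.sib_mem hs (Nat.le_succ i)
      obtain ⟨C, hC⟩ := ihi hi
      obtain ⟨l, hl⟩ := (derives_states hP hi).2.1
      have hns : T.nsR (u ++ [i]) (u ++ [i + 1]) := ⟨hi, hs, u, i, rfl, rfl⟩
      exact ⟨_, derives_rule hP (.ctxNext C (T.label (u ++ [i])) l) hi hs
        (by simpa [DAtom.ExtHolds, hi] using hns)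
        (by simp only [List.mem_cons]; rintro i y (h | h | h | h | h) <;> simp_all)⟩

/-- The program computes the nodes whose marking makes the algebra accept. -/
lemma derives_out_iff (hP : ∀ r, r ∈ P ↔ M.IsRule acc r) {s : Node} (hs : s ∈ T.dom) :
    Derives T P .out s ↔
      M.run T.label (ann (fun _ => s) fun _ => ∅) (T.enc []) ∈ acc := by
  refine ⟨fun h => sem_of_derives hP h, fun h => ?_⟩
  obtain ⟨C, hC⟩ := derives_ctx hP hs
  obtain ⟨-, ⟨l, hl⟩, r, hr⟩ := derives_states hP hs
  have hW : ∀ t, t ≠ s → ann (fun _ => s) (fun _ => ∅) t = ∅ := fun t ht => by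
    rw [ann_const]; simp [ht]
  have hW' : ann (fun _ => s) (fun _ => ∅) s = marked := by
    rw [ann_const]; simp
  have hl' : M.run _ _ (T.enc (s ++ [0])) = l := sem_of_derives hP hl
  have hr' : M.run _ _ (T.encR s) = r := sem_of_derives hP hr
  have hC' := (sem_of_derives hP hC (ann (fun _ => s) fun _ => ∅) fun t ht => hW t (by
    rintro rfl
    exact ht (by rw [UTree.enc_of_mem hs]; simp))).1 h
  rw [run_enc hs, hW',
    M.run_congr (t := T.enc (s ++ [0])) (W' := fun _ => ∅) fun t ht => hW t
      (by rintro rfl; exact UTree.not_mem_enc_child _ ht),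
    M.run_congr (t := T.encR s) (W' := fun _ => ∅) fun t ht => hW t
      (by rintro rfl; exact UTree.not_mem_encR _ ht), hl', hr'] at hC'
  exact derives_rule hP (.out C (T.label s) l r hC') hs hs (by simp [DAtom.ExtHolds, hs])
    (by simp only [List.mem_cons]; rintro i y (h | h | h | h | h) <;> simp_all)

end Alg

/-- An MSO-definable unary query is definable in monadic datalog. -/
theorem exists_datalog_of_mso {A : Type} [Finite A] {Q : UTree A → Set Node}
    (hQ : ∀ T, Q T ⊆ ↑T.dom) {φ : MSO A} (hφ : φ.DefinesU Q) :
    ∃ (I : Type) (_ : Fintype I) (P : List (DRule A I)) (H : I),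
      ∀ T : UTree A, Q T = {s : Node | Derives T P H s} := by
  obtain ⟨R, ⟨S, hS, M, acc, hR⟩, hsat⟩ := recognizable_sat φ
  have hP : ∀ r, r ∈ (M.finite_isRule acc).toFinset.toList ↔ M.IsRule acc r := by simp
  refine ⟨Pr S, Fintype.ofFinite _, (M.finite_isRule acc).toFinset.toList, .out, fun T => ?_⟩
  -- `0` is the only variable whose value matters, so all variables may point to `s`
  have key : ∀ s ∈ T.dom, (s ∈ Q T ↔ Derives T (M.finite_isRule acc).toFinset.toList .out s) := by
    intro s hs
    rw [Alg.derives_out_iff hP hs, ← hR, ← hsat T _ _ fun _ => hs,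
      hφ T (fun _ => s) (fun _ => ∅) s hs, Function.update_eq_self_iff.2 rfl]
  ext s
  exact ⟨fun h => (key s (hQ T h)).1 h, fun h => (key s h.mem_dom).2 h⟩

/-- A unary query over ordered unranked Σ-trees is MSO-definable
iff it is definable in monadic datalog over the extensional predicates
`≺_fc`, `≺_ns`, `Leaf`, `LastChild`, `Root`, and `P_a` (a ∈ Σ). -/
theorem mso_iff_monadic_datalog (A : Type) [Fintype A]
    (Q : UTree A → Set Node) (hQ : ∀ T, Q T ⊆ ↑T.dom) :
    (∃ φ : MSO A, φ.DefinesU Q) ↔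
      ∃ (I : Type) (_ : Fintype I) (P : List (DRule A I)) (H : I),
        ∀ T : UTree A, Q T = {s : Node | Derives T P H s} := by
  constructor
  · rintro ⟨φ, hφ⟩
    exact exists_datalog_of_mso hQ hφ
  · rintro ⟨I, _, P, H, h⟩
    obtain ⟨φ, hφ⟩ := exists_mso_of_datalog P H
    refine ⟨φ, fun T v V s hs => ?_⟩
    rw [h T]
    exact hφ T v V s hs

end UnrankedTrees
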